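/- arXiv:1304.3302 — 6 statements merged into one kernel-verified Lean document; each statement's English description precedes it below -/
import Mathlib

section
/- Let μ₁, μ₂, ρ₁, ρ₂ > 0. For every z ∈ ℂ with Re z ≥ 0 one has Re ψ(z) > 0; in particular ψ(z) ≠ 0 on the closed right half-plane (ψ maps the closed right half-plane into the open right half-plane). -/
open Complex

/-- `ω(z) = (1 + ρ z/μ)^{1/2}`, principal branch. -/
noncomputable def omegaSym (μ ρ : ℝ) (z : ℂ) : ℂ :=
  (1 + (ρ : ℂ) * z / (μ : ℂ)) ^ ((1 : ℂ)/2)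

/-- The function `ψ` from the Lopatinskii analysis. -/
noncomputable def psiSym (μ₁ μ₂ ρ₁ ρ₂ : ℝ) (z : ℂ) : ℂ :=
  (μ₂ : ℂ) * ((omegaSym μ₁ ρ₁ z + 1)/(omegaSym μ₁ ρ₁ z ^ 2 + 1)) *
      ((omegaSym μ₂ ρ₂ z - 1)/omegaSym μ₂ ρ₂ z
        + 2 * (omegaSym μ₂ ρ₂ z + 1)/(omegaSym μ₂ ρ₂ z ^ 2 + 1))
  + (μ₁ : ℂ) * ((omegaSym μ₂ ρ₂ z + 1)/(omegaSym μ₂ ρ₂ z ^ 2 + 1)) *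
      ((omegaSym μ₁ ρ₁ z - 1)/omegaSym μ₁ ρ₁ z
        + 2 * (omegaSym μ₁ ρ₁ z + 1)/(omegaSym μ₁ ρ₁ z ^ 2 + 1))

lemma aux_A_poly (a b : ℝ) (ha : 1 ≤ a) (hb : 0 ≤ b) (h : 1 ≤ a ^ 2 - b ^ 2) :
    b * (a ^ 2 + b ^ 2 + 2 * a - 1) ≤ 2 * ((a + 1) * (a ^ 2 - b ^ 2 + 1) + 2 * a * b ^ 2) := by
  have hba : b ≤ a := by nlinarith
  have h1 : b * (a ^ 2 + b ^ 2) ≤ a * (a ^ 2 + b ^ 2) := by gcongr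
  have h2 : 1 * (a ^ 2 + b ^ 2) ≤ a * (a ^ 2 + b ^ 2) := by gcongr
  nlinarith [sq_nonneg (a - b)]

lemma aux_B_poly (a b m d : ℝ) (ha : 1 ≤ a) (hb : 0 ≤ b) (hm : m = a ^ 2 + b ^ 2)
    (hd : d = a ^ 2 - b ^ 2) (h : 1 ≤ d) :
    2 * (b * (m ^ 2 + 4 * m * a - 2 * m - 2 * d - 1))
      < m ^ 3 + 4 * m * d + 3 * m + a * m ^ 2 + 2 * a * m - 2 * a * d - a := by
  have hba : b ≤ a := by nlinarith
  have hdm : d ≤ m := by nlinarith [sq_nonneg b]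
  have hm1 : 1 ≤ m := by linarith
  have hab : 2 * (a * b) ≤ m := by nlinarith [sq_nonneg (a - b)]
  have hbm : 2 * b ≤ m := by nlinarith
  have e1 : 0 ≤ a * (m - d) := mul_nonneg (by linarith) (by linarith)
  have e2 : 0 ≤ m * (d - 1) := mul_nonneg (by linarith) (by linarith)
  have e3 : 0 ≤ b * d := mul_nonneg hb (by linarith)
  have e4 : 0 ≤ (a - b) * (m ^ 2 - 1) := mul_nonneg (by linarith) (by nlinarith)
  have e5 : 0 ≤ m * (m - 2 * (a * b)) := mul_nonneg (by linarith) (by linarith)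
  have key : 0 < m ^ 2 + 7 - 4 * m - b * (m - 4) := by
    rcases le_total m 4 with h4 | h4
    · nlinarith [sq_nonneg (m - 2), mul_nonneg hb (sub_nonneg.2 h4)]
    · nlinarith [sq_nonneg (m - 2), mul_nonneg (sub_nonneg.2 hbm) (sub_nonneg.2 h4)]
  have key2 := mul_pos (by linarith : 0 < m) key
  nlinarith

lemma aux_A (w : ℂ) (ha : 1 ≤ w.re) (h : 1 ≤ w.re ^ 2 - w.im ^ 2) :
    0 < ((w + 1) / (w ^ 2 + 1)).re ∧
      |((w + 1) / (w ^ 2 + 1)).im| ≤ 2 * ((w + 1) / (w ^ 2 + 1)).re := by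
  obtain ⟨a, b⟩ := w
  simp only at ha h
  have hn : 0 < Complex.normSq ((⟨a, b⟩ : ℂ) ^ 2 + 1) := by
    rw [Complex.normSq_pos]
    intro h0
    have := congrArg Complex.re h0
    simp [pow_two] at this
    nlinarith
  have hre : (((⟨a, b⟩ : ℂ) + 1) / ((⟨a, b⟩ : ℂ) ^ 2 + 1)).re
      = ((a + 1) * (a ^ 2 - b ^ 2 + 1) + 2 * a * b ^ 2) /
        Complex.normSq ((⟨a, b⟩ : ℂ) ^ 2 + 1) := by
    rw [Complex.div_re, ← add_div]
    congr 1
    simp [pow_two]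
    ring
  have him : (((⟨a, b⟩ : ℂ) + 1) / ((⟨a, b⟩ : ℂ) ^ 2 + 1)).im
      = (-(b * (a ^ 2 + b ^ 2 + 2 * a - 1))) /
        Complex.normSq ((⟨a, b⟩ : ℂ) ^ 2 + 1) := by
    rw [Complex.div_im, ← sub_div]
    congr 1
    simp [pow_two]
    ring
  rw [hre, him]
  constructor
  · apply div_pos _ hn
    have : 0 < (a + 1) * (a ^ 2 - b ^ 2 + 1) := mul_pos (by linarith) (by linarith)
    have : 0 ≤ 2 * a * b ^ 2 := by positivity
    linarith
  · rw [abs_div, abs_of_pos hn, ← mul_div_assoc]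
    gcongr
    have := aux_A_poly a |b| ha (abs_nonneg b) (by rwa [sq_abs])
    rw [sq_abs] at this
    rwa [abs_neg, abs_mul, abs_of_nonneg (show 0 ≤ a ^ 2 + b ^ 2 + 2 * a - 1 by nlinarith [sq_nonneg b])]

lemma aux_B (w : ℂ) (ha : 1 ≤ w.re) (h : 1 ≤ w.re ^ 2 - w.im ^ 2) :
    2 * |((w - 1) / w + 2 * (w + 1) / (w ^ 2 + 1)).im|
      < ((w - 1) / w + 2 * (w + 1) / (w ^ 2 + 1)).re := by
  have hw0 : w ≠ 0 := by
    rintro rfl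
    simp at ha
    linarith
  have hw1 : w ^ 2 + 1 ≠ 0 := by
    intro h0
    have := congrArg Complex.re h0
    simp [pow_two] at this
    nlinarith
  have hn : 0 < Complex.normSq (w * (w ^ 2 + 1)) := by
    rw [Complex.normSq_pos]
    exact mul_ne_zero hw0 hw1
  have hB : (w - 1) / w + 2 * (w + 1) / (w ^ 2 + 1)
      = (w ^ 3 + w ^ 2 + 3 * w - 1) / (w * (w ^ 2 + 1)) := by
    field_simp
    ring
  rw [hB]
  obtain ⟨a, b⟩ := w
  simp only at ha h
  rw [Complex.div_re, Complex.div_im, ← add_div, ← sub_div, abs_div, abs_of_pos hn,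
    ← mul_div_assoc]
  apply div_lt_div_of_pos_right _ hn
  have key := aux_B_poly a |b| (a ^ 2 + b ^ 2) (a ^ 2 - b ^ 2) ha (abs_nonneg b)
    (by rw [sq_abs]) (by rw [sq_abs]) h
  set m := a ^ 2 + b ^ 2 with hm
  set d := a ^ 2 - b ^ 2 with hd
  have hdm : d ≤ m := by nlinarith [sq_nonneg b]
  have hq : 0 ≤ m ^ 2 + 4 * m * a - 2 * m - 2 * d - 1 := by nlinarith
  rw [← abs_of_nonneg hq, ← abs_mul, ← abs_neg] at key
  refine lt_of_eq_of_lt ?_ (lt_of_lt_of_eq key ?_)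
  · refine congrArg (fun t : ℝ => 2 * |t|) ?_
    simp only [pow_succ, pow_zero, one_mul, hm, hd, Complex.add_re, Complex.add_im, Complex.mul_re,
      Complex.mul_im, Complex.sub_re, Complex.sub_im, Complex.one_re, Complex.one_im,
      Complex.re_ofNat, Complex.im_ofNat]
    ring
  · simp only [pow_succ, pow_zero, one_mul, hm, hd, Complex.add_re, Complex.add_im, Complex.mul_re,
      Complex.mul_im, Complex.sub_re, Complex.sub_im, Complex.one_re, Complex.one_im,
      Complex.re_ofNat, Complex.im_ofNat]
    ring

lemma aux_omega (μ ρ : ℝ) (hμ : 0 < μ) (hρ : 0 < ρ) (z : ℂ) (hz : 0 ≤ z.re) :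
    1 ≤ (omegaSym μ ρ z).re ∧ 1 ≤ (omegaSym μ ρ z).re ^ 2 - (omegaSym μ ρ z).im ^ 2 := by
  have hsq : omegaSym μ ρ z ^ 2 = 1 + (ρ : ℂ) * z / (μ : ℂ) := by
    unfold omegaSym
    rw [← Complex.cpow_nat_mul]
    simp
  have hre : (omegaSym μ ρ z).re ^ 2 - (omegaSym μ ρ z).im ^ 2 = 1 + ρ * z.re / μ := by
    have := congrArg Complex.re hsq
    rw [Complex.add_re, Complex.div_ofReal_re, Complex.re_ofReal_mul] at this
    simp only [pow_two, Complex.mul_re, Complex.one_re] at this ⊢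
    exact this
  have hpos : 0 ≤ ρ * z.re / μ := by positivity
  have h0 : 0 ≤ (omegaSym μ ρ z).re := by
    have : omegaSym μ ρ z = (1 + (ρ : ℂ) * z / (μ : ℂ)) ^ ((2 : ℂ)⁻¹) := by
      unfold omegaSym
      simp
    rw [this, Complex.cpow_inv_two_re]
    positivity
  refine ⟨?_, by linarith⟩
  nlinarith [sq_nonneg (omegaSym μ ρ z).im]

lemma aux_mul (A B : ℂ) (μ : ℝ) (hμ : 0 < μ) (hA0 : 0 < A.re) (hA : |A.im| ≤ 2 * A.re)
    (hB : 2 * |B.im| < B.re) : 0 < ((μ : ℂ) * A * B).re := by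
  rw [mul_assoc, Complex.re_ofReal_mul, Complex.mul_re]
  apply mul_pos hμ
  have h1 : A.im * B.im ≤ |A.im| * |B.im| := by
    rw [← abs_mul]
    exact le_abs_self _
  have h2 : |A.im| * |B.im| ≤ 2 * A.re * |B.im| := by gcongr
  nlinarith

/-- `ψ` maps the closed right half-plane into the open right half-plane:
`Re ψ(z) > 0` and in particular `ψ(z) ≠ 0` for `Re z ≥ 0`. -/
theorem psi_maps_right_halfplane (μ₁ μ₂ ρ₁ ρ₂ : ℝ)
    (hμ₁ : 0 < μ₁) (hμ₂ : 0 < μ₂) (hρ₁ : 0 < ρ₁) (hρ₂ : 0 < ρ₂) :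
    ∀ z : ℂ, 0 ≤ z.re →
      0 < (psiSym μ₁ μ₂ ρ₁ ρ₂ z).re ∧ psiSym μ₁ μ₂ ρ₁ ρ₂ z ≠ 0 := by
  intro z hz
  obtain ⟨ha1, hb1⟩ := aux_omega μ₁ ρ₁ hμ₁ hρ₁ z hz
  obtain ⟨ha2, hb2⟩ := aux_omega μ₂ ρ₂ hμ₂ hρ₂ z hz
  obtain ⟨p1, q1⟩ := aux_A _ ha1 hb1
  obtain ⟨p2, q2⟩ := aux_A _ ha2 hb2
  have r1 := aux_B _ ha1 hb1
  have r2 := aux_B _ ha2 hb2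
  have key : 0 < (psiSym μ₁ μ₂ ρ₁ ρ₂ z).re := by
    unfold psiSym
    rw [Complex.add_re]
    exact add_pos (aux_mul _ _ μ₂ hμ₂ p1 q1 r2) (aux_mul _ _ μ₁ hμ₁ p2 q2 r1)
  refine ⟨key, fun h0 => ?_⟩
  rw [h0] at key
  simp at key
end

section
/- Let μ₁, μ₂, ρ₁, ρ₂ > 0. Then the function ℓ is complex-analytic at every point z₀ ∈ ℂ with Re z₀ ≥ 0 (in particular ℓ is analytic on an open neighborhood of the closed right half-plane). -/
open Complex

/-- The numerator `N` in the definition of `ℓ = N/ψ`. -/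
noncomputable def numSym (μ₁ μ₂ ρ₁ ρ₂ : ℝ) (z : ℂ) : ℂ :=
  (ρ₁ : ℂ) * (μ₂ : ℂ) *
      ((omegaSym μ₁ ρ₁ z - 1)/(omegaSym μ₁ ρ₁ z * (omegaSym μ₁ ρ₁ z ^ 2 + 1))) *
      ((omegaSym μ₂ ρ₂ z - 1)/omegaSym μ₂ ρ₂ z
        + 2 * (omegaSym μ₂ ρ₂ z + 1)/(omegaSym μ₂ ρ₂ z ^ 2 + 1))
  - (ρ₂ : ℂ) * (μ₁ : ℂ) *
      ((omegaSym μ₂ ρ₂ z - 1)/(omegaSym μ₂ ρ₂ z * (omegaSym μ₂ ρ₂ z ^ 2 + 1))) *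
      ((omegaSym μ₁ ρ₁ z - 1)/omegaSym μ₁ ρ₁ z
        + 2 * (omegaSym μ₁ ρ₁ z + 1)/(omegaSym μ₁ ρ₁ z ^ 2 + 1))

/-- `ℓ(z) = N(z)/ψ(z)`. -/
noncomputable def ellSym (μ₁ μ₂ ρ₁ ρ₂ : ℝ) (z : ℂ) : ℂ :=
  numSym μ₁ μ₂ ρ₁ ρ₂ z / psiSym μ₁ μ₂ ρ₁ ρ₂ z

/-- The principal square root `ω` satisfies `Re ω ≥ 1` and `Re ω² ≥ 1` for `Re z ≥ 0`. -/
lemma base_re (μ ρ : ℝ) (hμ : 0 < μ) (hρ : 0 < ρ) (z : ℂ) (hz : 0 ≤ z.re) :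
    1 ≤ (1 + (ρ : ℂ) * z / (μ : ℂ)).re := by
  have h : (ρ : ℂ) * z / (μ : ℂ) = ((ρ / μ : ℝ) : ℂ) * z := by push_cast; ring
  rw [h, Complex.add_re, Complex.re_ofReal_mul, Complex.one_re]
  have : 0 ≤ ρ / μ * z.re := by positivity
  linarith

lemma omega_sq (μ ρ : ℝ) (z : ℂ) :
    omegaSym μ ρ z ^ 2 = 1 + (ρ : ℂ) * z / (μ : ℂ) := by
  unfold omegaSym
  rw [one_div]
  exact Complex.cpow_ofNat_inv_pow _ 2

lemma cpow_half_re_nonneg (w : ℂ) (hw : w ≠ 0) : 0 ≤ (w ^ ((1 : ℂ) / 2)).re := by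
  rw [Complex.cpow_def_of_ne_zero hw, Complex.exp_re]
  have h : (Complex.log w * (1 / 2)).im = w.arg / 2 := by
    have : Complex.log w * (1 / 2) = ((1 / 2 : ℝ) : ℂ) * Complex.log w := by push_cast; ring
    rw [this, Complex.im_ofReal_mul, Complex.log_im]; ring
  rw [h]
  have h1 := Complex.neg_pi_lt_arg w
  have h2 := Complex.arg_le_pi w
  exact mul_nonneg (Real.exp_pos _).le
    (Real.cos_nonneg_of_mem_Icc ⟨by linarith, by linarith⟩)

lemma omega_re (μ ρ : ℝ) (hμ : 0 < μ) (hρ : 0 < ρ) (z : ℂ) (hz : 0 ≤ z.re) :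
    1 ≤ (omegaSym μ ρ z).re := by
  have hb := base_re μ ρ hμ hρ z hz
  have h0 : 0 ≤ (omegaSym μ ρ z).re := by
    apply cpow_half_re_nonneg
    intro h
    rw [h, Complex.zero_re] at hb
    linarith
  rw [← omega_sq, pow_two, Complex.mul_re] at hb
  nlinarith [mul_self_nonneg (omegaSym μ ρ z).im]

lemma omega_analytic (μ ρ : ℝ) (hμ : 0 < μ) (hρ : 0 < ρ) (z : ℂ) (hz : 0 ≤ z.re) :
    AnalyticAt ℂ (omegaSym μ ρ) z := by
  have hb := base_re μ ρ hμ hρ z hz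
  unfold omegaSym
  refine AnalyticAt.cpow ?_ analyticAt_const (Or.inl (by linarith))
  simp only [div_eq_mul_inv]
  fun_prop

lemma ne_zero_of_re {w : ℂ} (h : 0 < w.re) : w ≠ 0 := by
  rintro rfl
  simp at h

/-- The key positivity: `B / A = ω - 1/ω + 4/(ω+1)` has positive real part. -/
lemma key_re (w : ℂ) (hw : 1 ≤ w.re) : 0 < (w - w⁻¹ + 4 * (w + 1)⁻¹).re := by
  have h0 : w ≠ 0 := ne_zero_of_re (by linarith)
  have h1 : w + 1 ≠ 0 := ne_zero_of_re (by simp; linarith)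
  have hi : (w⁻¹).re ≤ 1 := by
    rw [Complex.inv_re, div_le_one (Complex.normSq_pos.mpr h0), Complex.normSq_apply]
    nlinarith [mul_self_nonneg w.im]
  have hj : 0 < ((w + 1)⁻¹).re := by
    rw [Complex.inv_re]
    exact div_pos (by simp; linarith) (Complex.normSq_pos.mpr h1)
  have h4 : (4 * (w + 1)⁻¹).re = 4 * ((w + 1)⁻¹).re := by
    rw [show (4 : ℂ) = ((4 : ℝ) : ℂ) by norm_num, Complex.re_ofReal_mul]
  rw [Complex.add_re, Complex.sub_re, h4]
  linarith

lemma key_eq (w : ℂ) (h0 : w ≠ 0) (h1 : w + 1 ≠ 0) (h2 : w ^ 2 + 1 ≠ 0) :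
    (w - 1) / w + 2 * (w + 1) / (w ^ 2 + 1)
      = ((w + 1) / (w ^ 2 + 1)) * (w - w⁻¹ + 4 * (w + 1)⁻¹) := by
  field_simp
  ring

lemma omega_sq_ne (μ ρ : ℝ) (hμ : 0 < μ) (hρ : 0 < ρ) (z : ℂ) (hz : 0 ≤ z.re) :
    omegaSym μ ρ z ^ 2 + 1 ≠ 0 := by
  have hb := base_re μ ρ hμ hρ z hz
  rw [omega_sq]
  apply ne_zero_of_re
  rw [Complex.add_re, Complex.one_re]
  linarith

lemma psi_ne (μ₁ μ₂ ρ₁ ρ₂ : ℝ)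
    (hμ₁ : 0 < μ₁) (hμ₂ : 0 < μ₂) (hρ₁ : 0 < ρ₁) (hρ₂ : 0 < ρ₂) (z : ℂ) (hz : 0 ≤ z.re) :
    psiSym μ₁ μ₂ ρ₁ ρ₂ z ≠ 0 := by
  have r1 := omega_re μ₁ ρ₁ hμ₁ hρ₁ z hz
  have r2 := omega_re μ₂ ρ₂ hμ₂ hρ₂ z hz
  have s1 := omega_sq_ne μ₁ ρ₁ hμ₁ hρ₁ z hz
  have s2 := omega_sq_ne μ₂ ρ₂ hμ₂ hρ₂ z hz
  unfold psiSym
  generalize omegaSym μ₁ ρ₁ z = a at *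
  generalize omegaSym μ₂ ρ₂ z = b at *
  have a0 : a ≠ 0 := ne_zero_of_re (by linarith)
  have b0 : b ≠ 0 := ne_zero_of_re (by linarith)
  have a1 : a + 1 ≠ 0 := ne_zero_of_re (by simp; linarith)
  have b1 : b + 1 ≠ 0 := ne_zero_of_re (by simp; linarith)
  rw [key_eq a a0 a1 s1, key_eq b b0 b1 s2]
  have ka := key_re a r1
  have kb := key_re b r2
  generalize a - a⁻¹ + 4 * (a + 1)⁻¹ = p at *
  generalize b - b⁻¹ + 4 * (b + 1)⁻¹ = q at *
  have e : (μ₂ : ℂ) * ((a + 1) / (a ^ 2 + 1)) * ((b + 1) / (b ^ 2 + 1) * q)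
      + (μ₁ : ℂ) * ((b + 1) / (b ^ 2 + 1)) * ((a + 1) / (a ^ 2 + 1) * p)
      = ((a + 1) / (a ^ 2 + 1)) * ((b + 1) / (b ^ 2 + 1)) * (μ₂ * q + μ₁ * p) := by ring
  rw [e]
  refine mul_ne_zero (mul_ne_zero (div_ne_zero a1 s1) (div_ne_zero b1 s2)) (ne_zero_of_re ?_)
  rw [Complex.add_re, Complex.re_ofReal_mul, Complex.re_ofReal_mul]
  positivity

/-- `ℓ` is analytic at every point of the closed right half-plane. -/
theorem ell_analytic (μ₁ μ₂ ρ₁ ρ₂ : ℝ)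
    (hμ₁ : 0 < μ₁) (hμ₂ : 0 < μ₂) (hρ₁ : 0 < ρ₁) (hρ₂ : 0 < ρ₂) :
    ∀ z₀ : ℂ, 0 ≤ z₀.re → AnalyticAt ℂ (ellSym μ₁ μ₂ ρ₁ ρ₂) z₀ := by
  intro z hz
  have n1 := psi_ne μ₁ μ₂ ρ₁ ρ₂ hμ₁ hμ₂ hρ₁ hρ₂ z hz
  have r1 := omega_re μ₁ ρ₁ hμ₁ hρ₁ z hz
  have r2 := omega_re μ₂ ρ₂ hμ₂ hρ₂ z hz
  have s1 := omega_sq_ne μ₁ ρ₁ hμ₁ hρ₁ z hz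
  have s2 := omega_sq_ne μ₂ ρ₂ hμ₂ hρ₂ z hz
  have f1 := omega_analytic μ₁ ρ₁ hμ₁ hρ₁ z hz
  have f2 := omega_analytic μ₂ ρ₂ hμ₂ hρ₂ z hz
  have a0 : omegaSym μ₁ ρ₁ z ≠ 0 := ne_zero_of_re (by linarith)
  have b0 : omegaSym μ₂ ρ₂ z ≠ 0 := ne_zero_of_re (by linarith)
  have a2 := mul_ne_zero a0 s1
  have b2 := mul_ne_zero b0 s2
  have hN : AnalyticAt ℂ (numSym μ₁ μ₂ ρ₁ ρ₂) z := by
    unfold numSym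
    fun_prop (disch := assumption)
  have hP : AnalyticAt ℂ (psiSym μ₁ μ₂ ρ₁ ρ₂) z := by
    unfold psiSym
    fun_prop (disch := assumption)
  exact hN.div hP n1
end

section
/- Let μ₁, μ₂, ρ₁, ρ₂ > 0 and let z ∈ ℂ satisfy Re z ≥ 0 and Im z ≥ 0. Then each of the four summands of r₂(z), namely (ω₁(z)+ω₂(z))(ω₁(z)+1)(ω₂(z)+1), 2(ω₁(z)−1)(ω₂(z)−1), (μ₂/μ₁)·(2(ω₂(z)−1) + (ω₂(z)²+1)(ω₂(z)+1)), and (μ₁/μ₂)·(2(ω₁(z)−1) + (ω₁(z)²+1)(ω₁(z)+1)), has nonnegative imaginary part. -/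
open Complex

lemma omegaSym_props (μ ρ : ℝ) (hμ : 0 < μ) (hρ : 0 < ρ) (z : ℂ)
    (hre : 0 ≤ z.re) (him : 0 ≤ z.im) :
    1 ≤ (omegaSym μ ρ z).re ∧ 0 ≤ (omegaSym μ ρ z).im ∧
      (omegaSym μ ρ z).im ≤ (omegaSym μ ρ z).re ∧
      1 ≤ (omegaSym μ ρ z).re ^ 2 - (omegaSym μ ρ z).im ^ 2 := by
  set x : ℂ := 1 + (ρ : ℂ) * z / (μ : ℂ) with hx
  have hxe : x = 1 + ((ρ / μ : ℝ) : ℂ) * z := by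
    rw [hx]; push_cast; ring
  have hq : 0 < ρ / μ := div_pos hρ hμ
  have hxre : 1 ≤ x.re := by
    rw [hxe, add_re, re_ofReal_mul, one_re]
    have := mul_nonneg hq.le hre
    linarith
  have hxim : 0 ≤ x.im := by
    rw [hxe, add_im, im_ofReal_mul, one_im]
    have := mul_nonneg hq.le him
    linarith
  have hx0 : x ≠ 0 := by
    intro h
    rw [h, zero_re] at hxre
    linarith
  have hw : omegaSym μ ρ z = exp (log x * (1 / 2)) := by
    unfold omegaSym
    rw [← hx, cpow_def_of_ne_zero hx0]
  have hsq : omegaSym μ ρ z ^ 2 = x := by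
    rw [hw, ← exp_nat_mul]
    have : ((2 : ℕ) : ℂ) * (log x * (1 / 2)) = log x := by push_cast; ring
    rw [this, exp_log hx0]
  have hI : (log x * (1 / 2)).im = arg x / 2 := by
    have : log x * (1 / 2) = log x / ((2 : ℝ) : ℂ) := by push_cast; ring
    rw [this, div_ofReal_im, log_im]
  have hre0 : 0 ≤ (omegaSym μ ρ z).re := by
    rw [hw, exp_re, hI]
    refine mul_nonneg (Real.exp_pos _).le (Real.cos_nonneg_of_mem_Icc ⟨?_, ?_⟩)
    · linarith [neg_pi_lt_arg x]
    · linarith [arg_le_pi x]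
  have him0 : 0 ≤ (omegaSym μ ρ z).im := by
    rw [hw, exp_im, hI]
    have h0 := arg_nonneg_iff.2 hxim
    refine mul_nonneg (Real.exp_pos _).le (Real.sin_nonneg_of_nonneg_of_le_pi ?_ ?_)
    · linarith
    · linarith [arg_le_pi x]
  have h1 : 1 ≤ (omegaSym μ ρ z).re ^ 2 - (omegaSym μ ρ z).im ^ 2 := by
    have : (omegaSym μ ρ z ^ 2).re = x.re := by rw [hsq]
    rw [pow_two, mul_re] at this
    nlinarith
  exact ⟨by nlinarith [sq_nonneg (omegaSym μ ρ z).im], him0, by nlinarith, h1⟩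

lemma im_mul3_nonneg (a b c : ℂ) (ha : 0 ≤ a.im) (hb : 0 ≤ b.im) (hc : 0 ≤ c.im)
    (ha' : a.im ≤ a.re) (hb' : b.im ≤ b.re) (hc' : c.im ≤ c.re) :
    0 ≤ (a * b * c).im := by
  simp only [mul_im, mul_re]
  have h1 : a.im * b.im ≤ a.re * b.re := mul_le_mul ha' hb' hb (ha.trans ha')
  have h2 := mul_nonneg (sub_nonneg.2 h1) hc
  have h3 := mul_nonneg (mul_nonneg (ha.trans ha') hb) (hc.trans hc')
  have h4 := mul_nonneg (mul_nonneg ha (hb.trans hb')) (hc.trans hc')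
  nlinarith

lemma im_third_nonneg (r s : ℝ) (hr : 0 < r) (hs : 0 < s) (w : ℂ) (h1 : 1 ≤ w.re)
    (h2 : 0 ≤ w.im) (h3 : 1 ≤ w.re ^ 2 - w.im ^ 2) :
    0 ≤ (((r : ℂ) / (s : ℂ)) * (2 * (w - 1) + (w ^ 2 + 1) * (w + 1))).im := by
  rw [← ofReal_div, im_ofReal_mul]
  refine mul_nonneg (div_pos hr hs).le ?_
  have e : (2 * (w - 1) + (w ^ 2 + 1) * (w + 1)).im =
      2 * w.im + ((w.re ^ 2 - w.im ^ 2 + 1) * w.im + 2 * (w.re * w.im) * (w.re + 1)) := by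
    simp only [pow_two, add_im, add_re, mul_im, mul_re, sub_im, sub_re, one_im, one_re, re_ofNat,
      im_ofNat]
    ring
  rw [e]
  have : 0 ≤ w.re := by linarith
  have : 0 ≤ w.re ^ 2 - w.im ^ 2 + 1 := by linarith
  positivity

/-- in the closed first quadrant, each of the four summands of the reduced
Lopatinskii determinant `r₂` has nonnegative imaginary part. -/
theorem r2_summands_nonneg_im (μ₁ μ₂ ρ₁ ρ₂ : ℝ)
    (hμ₁ : 0 < μ₁) (hμ₂ : 0 < μ₂) (hρ₁ : 0 < ρ₁) (hρ₂ : 0 < ρ₂)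
    (z : ℂ) (hre : 0 ≤ z.re) (him : 0 ≤ z.im) :
    0 ≤ ((omegaSym μ₁ ρ₁ z + omegaSym μ₂ ρ₂ z) * (omegaSym μ₁ ρ₁ z + 1) *
          (omegaSym μ₂ ρ₂ z + 1)).im ∧
    0 ≤ (2 * (omegaSym μ₁ ρ₁ z - 1) * (omegaSym μ₂ ρ₂ z - 1)).im ∧
    0 ≤ (((μ₂ : ℂ)/(μ₁ : ℂ)) * (2 * (omegaSym μ₂ ρ₂ z - 1)
          + (omegaSym μ₂ ρ₂ z ^ 2 + 1) * (omegaSym μ₂ ρ₂ z + 1))).im ∧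
    0 ≤ (((μ₁ : ℂ)/(μ₂ : ℂ)) * (2 * (omegaSym μ₁ ρ₁ z - 1)
          + (omegaSym μ₁ ρ₁ z ^ 2 + 1) * (omegaSym μ₁ ρ₁ z + 1))).im := by
  obtain ⟨a1, a2, a3, a4⟩ := omegaSym_props μ₁ ρ₁ hμ₁ hρ₁ z hre him
  obtain ⟨b1, b2, b3, b4⟩ := omegaSym_props μ₂ ρ₂ hμ₂ hρ₂ z hre him
  refine ⟨?_, ?_, im_third_nonneg _ _ hμ₂ hμ₁ _ b1 b2 b4, im_third_nonneg _ _ hμ₁ hμ₂ _ a1 a2 a4⟩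
  · apply im_mul3_nonneg <;> simp only [add_im, add_re, one_im, one_re] <;> linarith
  · have e : (2 * (omegaSym μ₁ ρ₁ z - 1) * (omegaSym μ₂ ρ₂ z - 1)).im =
        2 * (((omegaSym μ₁ ρ₁ z).re - 1) * (omegaSym μ₂ ρ₂ z).im +
          (omegaSym μ₁ ρ₁ z).im * ((omegaSym μ₂ ρ₂ z).re - 1)) := by
      simp
      ring
    rw [e]
    have h1 := mul_nonneg (sub_nonneg.2 a1) b2
    have h2 := mul_nonneg a2 (sub_nonneg.2 b1)
    linarith
end

section
/- Let μ₁, μ₂, ρ₁, ρ₂ > 0. Then r₂(z) ≠ 0 for every z ∈ ℂ with Re z ≥ 0. -/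
open Complex

/-- The reduced Lopatinskii determinant `r₂` arising from the symbol of `S_λ^{22}`. -/
noncomputable def r2Sym (μ₁ μ₂ ρ₁ ρ₂ : ℝ) (z : ℂ) : ℂ :=
  (omegaSym μ₁ ρ₁ z + omegaSym μ₂ ρ₂ z) * (omegaSym μ₁ ρ₁ z + 1) * (omegaSym μ₂ ρ₂ z + 1)
  + 2 * (omegaSym μ₁ ρ₁ z - 1) * (omegaSym μ₂ ρ₂ z - 1)
  + ((μ₂ : ℂ)/(μ₁ : ℂ)) * (2 * (omegaSym μ₂ ρ₂ z - 1)
      + (omegaSym μ₂ ρ₂ z ^ 2 + 1) * (omegaSym μ₂ ρ₂ z + 1))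
  + ((μ₁ : ℂ)/(μ₂ : ℂ)) * (2 * (omegaSym μ₁ ρ₁ z - 1)
      + (omegaSym μ₁ ρ₁ z ^ 2 + 1) * (omegaSym μ₁ ρ₁ z + 1))

lemma omega_facts (μ ρ : ℝ) (hμ : 0 < μ) (hρ : 0 < ρ) (z : ℂ) (hz : 0 ≤ z.re) :
    1 ≤ (omegaSym μ ρ z).re ∧ 1 ≤ (omegaSym μ ρ z).re ^ 2 - (omegaSym μ ρ z).im ^ 2 ∧
    2 * (omegaSym μ ρ z).re * (omegaSym μ ρ z).im = ρ / μ * z.im := by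
  have hsq : omegaSym μ ρ z ^ 2 = 1 + ((ρ / μ : ℝ) : ℂ) * z := by
    have h := Complex.cpow_nat_inv_pow (1 + (ρ : ℂ) * z / (μ : ℂ)) (n := 2) (by norm_num)
    have h2 : ((1 : ℂ) / 2) = ((2 : ℕ) : ℂ)⁻¹ := by norm_num
    unfold omegaSym
    rw [h2, h]
    push_cast
    ring
  have hre : 0 ≤ (omegaSym μ ρ z).re := by
    unfold omegaSym
    by_cases h0 : (1 + (ρ : ℂ) * z / (μ : ℂ)) = 0
    · rw [h0]; simp
    · rw [Complex.cpow_def_of_ne_zero h0, Complex.exp_re]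
      have him : (Complex.log (1 + (ρ : ℂ) * z / (μ : ℂ)) * (1 / 2)).im
          = Complex.arg (1 + (ρ : ℂ) * z / (μ : ℂ)) / 2 := by
        have : (1 / 2 : ℂ) = ((1 / 2 : ℝ) : ℂ) := by norm_num
        rw [this, Complex.im_mul_ofReal, Complex.log_im]
        ring
      rw [him]
      apply mul_nonneg (Real.exp_pos _).le
      apply Real.cos_nonneg_of_mem_Icc
      constructor
      · linarith [Complex.neg_pi_lt_arg (1 + (ρ : ℂ) * z / (μ : ℂ))]
      · linarith [Complex.arg_le_pi (1 + (ρ : ℂ) * z / (μ : ℂ))]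
  have h1 := congrArg Complex.re hsq
  have h2 := congrArg Complex.im hsq
  rw [pow_two, Complex.mul_re, Complex.add_re, Complex.re_ofReal_mul, Complex.one_re] at h1
  rw [pow_two, Complex.mul_im, Complex.add_im, Complex.im_ofReal_mul, Complex.one_im] at h2
  have h3 : 0 ≤ ρ / μ * z.re := by positivity
  refine ⟨?_, ?_, ?_⟩ <;> nlinarith

lemma core (k l : ℝ) (hk : 0 < k) (hl : 0 < l) (v w : ℂ)
    (ha : 1 ≤ v.re) (hab : 1 ≤ v.re ^ 2 - v.im ^ 2) (hb : 0 ≤ v.im)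
    (hc : 1 ≤ w.re) (hcd : 1 ≤ w.re ^ 2 - w.im ^ 2) (hd : 0 ≤ w.im)
    (hz : 0 < v.im ∨ (v.im = 0 ∧ w.im = 0)) :
    (v + w) * (v + 1) * (w + 1) + 2 * (v - 1) * (w - 1)
      + (k : ℂ) * (2 * (w - 1) + (w ^ 2 + 1) * (w + 1))
      + (l : ℂ) * (2 * (v - 1) + (v ^ 2 + 1) * (v + 1)) ≠ 0 := by
  obtain ⟨a, b⟩ := v
  obtain ⟨c, d⟩ := w
  simp only at *
  intro h
  have hre := congrArg Complex.re h
  have him := congrArg Complex.im h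
  simp [pow_two] at hre him
  have hA : 0 ≤ a ^ 2 - b ^ 2 := by linarith
  have hC : 0 ≤ c ^ 2 - d ^ 2 := by linarith
  have cub : ∀ x y : ℝ, 1 ≤ x → 0 ≤ y → 0 ≤ x ^ 2 - y ^ 2 →
      0 ≤ (3 * x ^ 2 - y ^ 2) * y + 2 * x * y + 3 * y := by
    intro x y hx hy hxy
    have : 0 ≤ 3 * x ^ 2 - y ^ 2 := by nlinarith
    positivity
  rcases hz with hb' | ⟨rfl, rfl⟩
  · have e1 : 0 ≤ l * ((3 * a ^ 2 - b ^ 2) * b + 2 * a * b + 3 * b) :=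
      mul_nonneg hl.le (cub a b ha hb hA)
    have e2 : 0 ≤ k * ((3 * c ^ 2 - d ^ 2) * d + 2 * c * d + 3 * d) :=
      mul_nonneg hk.le (cub c d hc hd hC)
    have e3 : 0 ≤ (a - 1) * d + b * (c - 1) :=
      add_nonneg (mul_nonneg (by linarith) hd) (mul_nonneg hb (by linarith))
    have e4 : 0 ≤ (a ^ 2 - b ^ 2) * d + 2 * a * b * c := by positivity
    have e5 : 0 ≤ (c ^ 2 - d ^ 2) * b + 2 * c * d * a := by positivity
    have e6 : 0 ≤ 2 * a * b + 2 * c * d + 2 * (a * d + b * c) + d := by positivity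
    nlinarith
  · have e1 : 0 < l * (2 * (a - 1) + (a * a + 1) * (a + 1)) := by
      have : 0 ≤ a - 1 := by linarith
      positivity
    have e2 : 0 < k * (2 * (c - 1) + (c * c + 1) * (c + 1)) := by
      have : 0 ≤ c - 1 := by linarith
      positivity
    have e3 : 0 ≤ (a - 1) * (c - 1) := mul_nonneg (by linarith) (by linarith)
    have e4 : 0 < (a + c) * (a + 1) * (c + 1) := by positivity
    nlinarith

theorem r2_ne_zero (μ₁ μ₂ ρ₁ ρ₂ : ℝ)
    (hμ₁ : 0 < μ₁) (hμ₂ : 0 < μ₂) (hρ₁ : 0 < ρ₁) (hρ₂ : 0 < ρ₂) :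
    ∀ z : ℂ, 0 ≤ z.re → r2Sym μ₁ μ₂ ρ₁ ρ₂ z ≠ 0 := by
  intro z hz
  obtain ⟨a1, a2, a3⟩ := omega_facts μ₁ ρ₁ hμ₁ hρ₁ z hz
  obtain ⟨b1, b2, b3⟩ := omega_facts μ₂ ρ₂ hμ₂ hρ₂ z hz
  have hq1 : 0 < ρ₁ / μ₁ := by positivity
  have hq2 : 0 < ρ₂ / μ₂ := by positivity
  have hk : 0 < μ₂ / μ₁ := by positivity
  have hl : 0 < μ₁ / μ₂ := by positivity
  unfold r2Sym
  generalize omegaSym μ₁ ρ₁ z = v at *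
  generalize omegaSym μ₂ ρ₂ z = w at *
  have p1 : 0 < 2 * v.re := by linarith
  have p2 : 0 < 2 * w.re := by linarith
  rcases lt_trichotomy z.im 0 with hi | hi | hi
  · have v1 : v.im < 0 := by
      have := mul_neg_of_pos_of_neg hq1 hi
      rw [← a3] at this
      exact (pos_iff_neg_of_mul_neg this).1 p1
    have w1 : w.im < 0 := by
      have := mul_neg_of_pos_of_neg hq2 hi
      rw [← b3] at this
      exact (pos_iff_neg_of_mul_neg this).1 p2
    have := core (μ₂ / μ₁) (μ₁ / μ₂) hk hl (starRingEnd ℂ v) (starRingEnd ℂ w)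
      (by simpa using a1) (by simpa using a2) (by simpa using v1.le)
      (by simpa using b1) (by simpa using b2) (by simpa using w1.le) (Or.inl (by simpa using v1))
    intro h
    apply this
    have h' := congrArg (starRingEnd ℂ) h
    have h2 : (starRingEnd ℂ) (2 : ℂ) = 2 := Complex.conj_ofNat 2
    simpa [h2] using h'
  · rw [hi, mul_zero] at a3 b3
    have v1 : v.im = 0 := (mul_eq_zero.1 a3).resolve_left p1.ne'
    have w1 : w.im = 0 := (mul_eq_zero.1 b3).resolve_left p2.ne'
    have := core (μ₂ / μ₁) (μ₁ / μ₂) hk hl v w a1 a2 v1.ge b1 b2 w1.ge (Or.inr ⟨v1, w1⟩)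
    simpa using this
  · have v1 : 0 < v.im := by
      have := mul_pos hq1 hi
      rw [← a3] at this
      exact (pos_iff_pos_of_mul_pos this).1 p1
    have w1 : 0 < w.im := by
      have := mul_pos hq2 hi
      rw [← b3] at this
      exact (pos_iff_pos_of_mul_pos this).1 p2
    have := core (μ₂ / μ₁) (μ₁ / μ₂) hk hl v w a1 a2 v1.le b1 b2 w1.le (Or.inl v1)
    simpa using this
end

section
/- Let μ₁, μ₂, ρ₁, ρ₂ > 0 and let z ∈ ℂ satisfy Re z ≥ 0 and Im z ≥ 0. Then each of the six summands of r₂ᵃ(z), namely ((ρ₂/ρ₁)ω₁(z) + (ρ₁/ρ₂)ω₂(z))(ω₁(z)+1)(ω₂(z)+1), 2(ω₁(z)−1)(ω₂(z)−1), 2(μ₂ρ₁/(μ₁ρ₂))(ω₂(z)−1), 2(μ₁ρ₂/(μ₂ρ₁))(ω₁(z)−1), (μ₂ρ₁/(μ₁ρ₂))(ω₂(z)²+1)(ω₂(z)+1), and (μ₁ρ₂/(μ₂ρ₁))(ω₁(z)²+1)(ω₁(z)+1), has nonnegative imaginary part. -/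
open Complex

lemma omegaSym_aux (μ ρ : ℝ) (hμ : 0 < μ) (hρ : 0 < ρ) (z : ℂ) (hre : 0 ≤ z.re)
    (him : 0 ≤ z.im) : 1 ≤ (omegaSym μ ρ z).re ∧ 0 ≤ (omegaSym μ ρ z).im ∧
      1 ≤ (omegaSym μ ρ z).re ^ 2 - (omegaSym μ ρ z).im ^ 2 := by
  have hsq : omegaSym μ ρ z ^ 2 = 1 + ((ρ / μ : ℝ) : ℂ) * z := by
    have h : omegaSym μ ρ z ^ 2 = 1 + (ρ : ℂ) * z / (μ : ℂ) := by
      unfold omegaSym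
      rw [one_div]
      exact_mod_cast Complex.cpow_nat_inv_pow (1 + (ρ : ℂ) * z / (μ : ℂ)) (n := 2) two_ne_zero
    rw [h]; push_cast; ring
  have hk : 0 < ρ / μ := div_pos hρ hμ
  have h0 : 0 ≤ (omegaSym μ ρ z).re := by
    unfold omegaSym
    by_cases hw : (1 + (ρ : ℂ) * z / (μ : ℂ)) = 0
    · rw [hw, Complex.zero_cpow (by norm_num)]; simp
    · rw [Complex.cpow_def_of_ne_zero hw, Complex.exp_re]
      apply mul_nonneg (Real.exp_pos _).le
      have e : (Complex.log (1 + (ρ : ℂ) * z / (μ : ℂ)) * (1 / 2)).im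
          = Complex.arg (1 + (ρ : ℂ) * z / (μ : ℂ)) / 2 := by
        rw [show (1 / 2 : ℂ) = ((1 / 2 : ℝ) : ℂ) by norm_num, Complex.im_mul_ofReal,
          Complex.log_im]
        ring
      rw [e]
      have h1 := Complex.neg_pi_lt_arg (1 + (ρ : ℂ) * z / (μ : ℂ))
      have h2 := Complex.arg_le_pi (1 + (ρ : ℂ) * z / (μ : ℂ))
      apply Real.cos_nonneg_of_neg_pi_div_two_le_of_le <;> linarith
  generalize omegaSym μ ρ z = w at *
  have hr := congrArg Complex.re hsq
  have hi := congrArg Complex.im hsq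
  simp only [pow_two, Complex.mul_re, Complex.mul_im, Complex.add_re, Complex.add_im,
    Complex.one_re, Complex.one_im, Complex.ofReal_re, Complex.ofReal_im, zero_mul,
    sub_zero, add_zero, zero_add] at hr hi
  have a1 := mul_nonneg hk.le hre
  have a2 := mul_nonneg hk.le him
  have ha : 1 ≤ w.re := by nlinarith [mul_self_nonneg w.im]
  refine ⟨ha, ?_, by nlinarith⟩
  by_contra hn
  nlinarith

/-- Closed first quadrant. -/
def Quad (w : ℂ) : Prop := 0 ≤ w.re ∧ 0 ≤ w.im

lemma Quad.mul_im {u v : ℂ} (hu : Quad u) (hv : Quad v) : 0 ≤ (u * v).im := by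
  rw [Complex.mul_im]
  exact add_nonneg (mul_nonneg hu.1 hv.2) (mul_nonneg hu.2 hv.1)

lemma real_mul_im {r : ℝ} (hr : 0 ≤ r) {w : ℂ} (hw : 0 ≤ w.im) : 0 ≤ ((r : ℂ) * w).im := by
  rw [Complex.im_ofReal_mul]; exact mul_nonneg hr hw

lemma quad_sq_add {w : ℂ} (h : 1 ≤ w.re ∧ 0 ≤ w.im ∧ 1 ≤ w.re ^ 2 - w.im ^ 2) :
    Quad (w + 1) ∧ Quad (w - 1) ∧ Quad (w ^ 2 + 1) ∧ Quad (w * (w + 1)) := by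
  obtain ⟨h1, h2, h3⟩ := h
  refine ⟨⟨?_, ?_⟩, ⟨?_, ?_⟩, ⟨?_, ?_⟩, ⟨?_, ?_⟩⟩ <;> simp [pow_two] <;> nlinarith

/-- in the closed first quadrant, each of the six summands of the reduced
Lopatinskii determinant `r₂ᵃ` (from the symbol of `S_λ^{11}`) has nonnegative imaginary part. -/
theorem r2a_summands_nonneg_im (μ₁ μ₂ ρ₁ ρ₂ : ℝ)
    (hμ₁ : 0 < μ₁) (hμ₂ : 0 < μ₂) (hρ₁ : 0 < ρ₁) (hρ₂ : 0 < ρ₂)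
    (z : ℂ) (hre : 0 ≤ z.re) (him : 0 ≤ z.im) :
    0 ≤ ((((ρ₂ : ℂ)/(ρ₁ : ℂ)) * omegaSym μ₁ ρ₁ z + ((ρ₁ : ℂ)/(ρ₂ : ℂ)) * omegaSym μ₂ ρ₂ z) *
          (omegaSym μ₁ ρ₁ z + 1) * (omegaSym μ₂ ρ₂ z + 1)).im ∧
    0 ≤ (2 * (omegaSym μ₁ ρ₁ z - 1) * (omegaSym μ₂ ρ₂ z - 1)).im ∧
    0 ≤ (2 * (((μ₂ : ℂ) * (ρ₁ : ℂ))/((μ₁ : ℂ) * (ρ₂ : ℂ))) * (omegaSym μ₂ ρ₂ z - 1)).im ∧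
    0 ≤ (2 * (((μ₁ : ℂ) * (ρ₂ : ℂ))/((μ₂ : ℂ) * (ρ₁ : ℂ))) * (omegaSym μ₁ ρ₁ z - 1)).im ∧
    0 ≤ ((((μ₂ : ℂ) * (ρ₁ : ℂ))/((μ₁ : ℂ) * (ρ₂ : ℂ))) *
          ((omegaSym μ₂ ρ₂ z ^ 2 + 1) * (omegaSym μ₂ ρ₂ z + 1))).im ∧
    0 ≤ ((((μ₁ : ℂ) * (ρ₂ : ℂ))/((μ₂ : ℂ) * (ρ₁ : ℂ))) *
          ((omegaSym μ₁ ρ₁ z ^ 2 + 1) * (omegaSym μ₁ ρ₁ z + 1))).im := by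
  have A := omegaSym_aux μ₁ ρ₁ hμ₁ hρ₁ z hre him
  have B := omegaSym_aux μ₂ ρ₂ hμ₂ hρ₂ z hre him
  generalize omegaSym μ₁ ρ₁ z = u at *
  generalize omegaSym μ₂ ρ₂ z = v at *
  obtain ⟨a1, a2, a3, a4⟩ := quad_sq_add A
  obtain ⟨b1, b2, b3, b4⟩ := quad_sq_add B
  have p : 0 ≤ (μ₂ * ρ₁) / (μ₁ * ρ₂) := by positivity
  have q : 0 ≤ (μ₁ * ρ₂) / (μ₂ * ρ₁) := by positivity
  have r : 0 ≤ ρ₂ / ρ₁ := by positivity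
  have s : 0 ≤ ρ₁ / ρ₂ := by positivity
  refine ⟨?_, ?_, ?_, ?_, ?_, ?_⟩
  · have this : (0:ℝ) ≤ (((ρ₂ / ρ₁ : ℝ) : ℂ) * (u * (u + 1) * (v + 1)) +
        ((ρ₁ / ρ₂ : ℝ) : ℂ) * (v * (v + 1) * (u + 1))).im := by
      rw [Complex.add_im]
      exact add_nonneg (real_mul_im r (a4.mul_im b1)) (real_mul_im s (b4.mul_im a1))
    convert this using 2
    push_cast; ring
  · have := real_mul_im zero_le_two (a2.mul_im b2)
    convert this using 2
    push_cast; ring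
  · have := real_mul_im (mul_nonneg zero_le_two p) b2.2
    convert this using 2
    push_cast; ring
  · have := real_mul_im (mul_nonneg zero_le_two q) a2.2
    convert this using 2
    push_cast; ring
  · exact_mod_cast real_mul_im p (b3.mul_im b1)
  · exact_mod_cast real_mul_im q (a3.mul_im a1)
end

section
/- Let μ₁, μ₂, ρ₁, ρ₂ > 0 and let z ∈ ℂ with z ∉ (−∞, 0] (z is not a nonpositive real number). Then Re(ω_j(z) + 1/ω_j(z)) > 0 for j = 1,2, hence γ(z) := μ₁(ω₁(z) + 1/ω₁(z)) + μ₂(ω₂(z) + 1/ω₂(z)) ≠ 0, and consequently r₁(z) := γ(z) / (ω₁(z)·ω₂(z)·(ω₁(z)+1)·(ω₂(z)+1)) ≠ 0. -/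
open Complex

theorem omegaSym_re_pos (μ ρ : ℝ) (hμ : 0 < μ) (hρ : 0 < ρ) (z : ℂ)
    (hz : ¬ (z.im = 0 ∧ z.re ≤ 0)) : 0 < (omegaSym μ ρ z).re := by
  have hq : 0 < ρ / μ := div_pos hρ hμ
  have hw : (1 + (ρ : ℂ) * z / (μ : ℂ)) = 1 + ((ρ / μ : ℝ) : ℂ) * z := by
    push_cast; ring
  unfold omegaSym
  rw [hw]
  generalize ρ / μ = q at hq
  have hs : (1 + (q : ℂ) * z) ∈ Complex.slitPlane := by
    rw [Complex.mem_slitPlane_iff]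
    by_cases h : z.im = 0
    · left
      have : 0 < z.re := by
        by_contra hn
        exact hz ⟨h, not_lt.mp hn⟩
      have := mul_pos hq this
      simp
      linarith
    · right
      simp [h, hq.ne']
  have h0 := Complex.slitPlane_ne_zero hs
  have ha := (Complex.mem_slitPlane_iff_arg.mp hs).1
  generalize 1 + (q : ℂ) * z = w at *
  rw [Complex.cpow_def_of_ne_zero h0, Complex.exp_re]
  have him : (Complex.log w * (1 / 2)).im = w.arg / 2 := by
    rw [show (1 / 2 : ℂ) = ((1 / 2 : ℝ) : ℂ) by push_cast; rfl, Complex.im_mul_ofReal,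
      Complex.log_im]
    ring
  rw [him]
  have h1 := Complex.neg_pi_lt_arg w
  have h2 := lt_of_le_of_ne (Complex.arg_le_pi w) ha
  exact mul_pos (Real.exp_pos _) (Real.cos_pos_of_mem_Ioo ⟨by linarith, by linarith⟩)

theorem re_add_inv_pos (w : ℂ) (hw : 0 < w.re) : 0 < (w + 1 / w).re := by
  have h0 : w ≠ 0 := by
    rintro rfl
    simp at hw
  have : 0 < w.re / Complex.normSq w := div_pos hw (Complex.normSq_pos.mpr h0)
  rw [one_div, Complex.add_re, Complex.inv_re]
  linarith

/-- for `z ∉ (−∞, 0]` one has `Re(ω_j(z) + 1/ω_j(z)) > 0` for `j = 1,2`,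
hence `γ(z) = μ₁(ω₁ + 1/ω₁) + μ₂(ω₂ + 1/ω₂) ≠ 0` and
`r₁(z) = γ(z)/(ω₁ω₂(ω₁+1)(ω₂+1)) ≠ 0`. -/
theorem r1_ne_zero (μ₁ μ₂ ρ₁ ρ₂ : ℝ)
    (hμ₁ : 0 < μ₁) (hμ₂ : 0 < μ₂) (hρ₁ : 0 < ρ₁) (hρ₂ : 0 < ρ₂)
    (z : ℂ) (hz : ¬ (z.im = 0 ∧ z.re ≤ 0)) :
    0 < (omegaSym μ₁ ρ₁ z + 1 / omegaSym μ₁ ρ₁ z).re ∧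
    0 < (omegaSym μ₂ ρ₂ z + 1 / omegaSym μ₂ ρ₂ z).re ∧
    (μ₁ : ℂ) * (omegaSym μ₁ ρ₁ z + 1 / omegaSym μ₁ ρ₁ z)
      + (μ₂ : ℂ) * (omegaSym μ₂ ρ₂ z + 1 / omegaSym μ₂ ρ₂ z) ≠ 0 ∧
    ((μ₁ : ℂ) * (omegaSym μ₁ ρ₁ z + 1 / omegaSym μ₁ ρ₁ z)
        + (μ₂ : ℂ) * (omegaSym μ₂ ρ₂ z + 1 / omegaSym μ₂ ρ₂ z)) /
      (omegaSym μ₁ ρ₁ z * omegaSym μ₂ ρ₂ z * (omegaSym μ₁ ρ₁ z + 1) *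
        (omegaSym μ₂ ρ₂ z + 1)) ≠ 0 := by
  have a1 := omegaSym_re_pos μ₁ ρ₁ hμ₁ hρ₁ z hz
  have a2 := omegaSym_re_pos μ₂ ρ₂ hμ₂ hρ₂ z hz
  generalize omegaSym μ₁ ρ₁ z = w₁ at *
  generalize omegaSym μ₂ ρ₂ z = w₂ at *
  have b1 := re_add_inv_pos w₁ a1
  have b2 := re_add_inv_pos w₂ a2
  have hg : (μ₁ : ℂ) * (w₁ + 1 / w₁) + (μ₂ : ℂ) * (w₂ + 1 / w₂) ≠ 0 := by
    intro h
    have h' := congrArg Complex.re h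
    rw [Complex.add_re, Complex.re_ofReal_mul, Complex.re_ofReal_mul, Complex.zero_re] at h'
    have := mul_pos hμ₁ b1
    have := mul_pos hμ₂ b2
    linarith
  have ne : ∀ w : ℂ, 0 < w.re → w ≠ 0 := by
    rintro w hw rfl
    simp at hw
  have c1 : w₁ + 1 ≠ 0 := ne _ (by rw [Complex.add_re, Complex.one_re]; linarith)
  have c2 : w₂ + 1 ≠ 0 := ne _ (by rw [Complex.add_re, Complex.one_re]; linarith)
  exact ⟨b1, b2, hg, div_ne_zero hg
    (mul_ne_zero (mul_ne_zero (mul_ne_zero (ne _ a1) (ne _ a2)) c1) c2)⟩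
end
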